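/- Under Jacod's density hypothesis and the noisy-barrier setup, set F^M_s(l) := p_s(l) 1_{X*_s > l} and N_t(x) := ∫_ℝ F^M_t(l) q_t(x − l) P^L(dl). Let t = t_0 < t_1 < ⋯ < t_{n+1} = T and let Z_0, …, Z_n be bounded random variables with Z_i F_{t_i}-measurable, and let w : Ω × ℝ → ℝ be F_t ⊗ B(ℝ)-measurable such that for P^L-almost every l, w(·,l) is a version of E_P[ Σ_{i=0}^n Z_i (F^M_{t_{i+1}}(l) − F^M_{t_i}(l)) | F_t ]. Then, P-almost surely, E_P[ Σ_{i=0}^n Z_i 1_{t_i < τ ≤ t_{i+1}} | G^I_t ] = − ( 1_{τ > t} / N_t(L_t) ) ∫_ℝ w(·,l) q_t(L_t − l) P^L(dl), where the right-hand side is taken to be 0 on {τ ≤ t}. (The recovery-payment term in the proof of Theorem 5.1 for stepwise recovery processes.) -/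

import Mathlib

open MeasureTheory ProbabilityTheory Set
open scoped NNReal Classical

noncomputable section

/-- Running infimum `X*_t = inf_{s ≤ t} X_s` of the process `X` over the time interval
`[0, t]`. -/
def runInf {Ω : Type*} (X : ℝ≥0 → Ω → ℝ) (t : ℝ≥0) (ω : Ω) : ℝ :=
  ⨅ s : Set.Icc (0 : ℝ≥0) t, X s.1 ω

/-- The supermartingale `F^M_s(l) := p_s(l) 1_{X*_s > l}`. -/
def FM {Ω : Type*} (p : ℝ≥0 → ℝ → Ω → ℝ) (X : ℝ≥0 → Ω → ℝ) (s : ℝ≥0) (l : ℝ) (ω : Ω) : ℝ :=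
  p s l ω * (if l < runInf X s ω then 1 else 0)

/-- `N_t(x) := ∫ F^M_t(l) q_t(x − l) P^L(dl)`. -/
def NI {Ω : Type*} [m0 : MeasurableSpace Ω] (P : Measure Ω) (p : ℝ≥0 → ℝ → Ω → ℝ)
    (X : ℝ≥0 → Ω → ℝ) (L : Ω → ℝ) (q : ℝ≥0 → ℝ → ℝ) (t : ℝ≥0) (x : ℝ) (ω : Ω) : ℝ :=
  ∫ l, FM p X t l ω * q t (x - l) ∂(P.map L)

/-- The σ-algebra `σ({τ ≤ s} : s ≤ t)` generated by the default observations up to time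
`t`. -/
def defaultSigma {Ω : Type*} (τ : Ω → ℝ≥0) (t : ℝ≥0) : MeasurableSpace Ω :=
  MeasurableSpace.generateFrom {A | ∃ s ≤ t, A = {ω | τ ω ≤ s}}

/-- The insider's full σ-algebra
`G^I_t = F_t ∨ σ(L_s = L + ε_s : s ≤ t) ∨ σ({τ ≤ s} : s ≤ t)`. -/
def insiderFullSigma {Ω : Type*} [m0 : MeasurableSpace Ω] (F : Filtration ℝ≥0 m0)
    (L : Ω → ℝ) (ε : ℝ≥0 → Ω → ℝ) (τ : Ω → ℝ≥0) (t : ℝ≥0) : MeasurableSpace Ω :=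
  F t ⊔ (⨆ s ∈ Set.Iic t, MeasurableSpace.comap (fun ω => L ω + ε s ω) inferInstance) ⊔
    defaultSigma τ t

/-!
Say that a random variable `Y` has density `W` along a random point `Φ` if `Y • P` is carried by
`Φ` to `W • μ`; when the survival indicator `1_{τ > t}` has density `N`, any `Y` vanishing on
`{τ ≤ t}` has conditional expectation given `Φ` equal to that of `1_{τ > t} (W / N)(Φ)`. By Jacod's
hypothesis `Z 1_{τ > s}` has density `Z F^M_s(l)` along `(ω, L ω)`, so the recovery payment has
density `-w`, and adding the independent noise `ε_t` smooths both densities by `q_t`. This gives the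
formula for the observation of `F_t` and `L_t` alone. The earlier values `L_s` add only the
increments `ε_s - ε_t`, which are independent of everything else, and on `{τ > t}` the default
observations add nothing.
-/

/-- `HasDensityAlong P Φ Y μ 𝓔 W`: restricted to the σ-algebra `𝓔`, the image under `Φ` of the
signed measure `Y • P` has density `W` with respect to `μ`. The density is only tested on `𝓔`, so
that `μ` may live on a larger σ-algebra. -/
structure HasDensityAlong {Ω E : Type*} {mΩ : MeasurableSpace Ω} {mE : MeasurableSpace E}
    (P : Measure Ω) (Φ : Ω → E) (Y : Ω → ℝ) (μ : Measure E)
    (𝓔 : MeasurableSpace E) (W : E → ℝ) : Prop where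
  integrable : Integrable Y P
  integrable_density : Integrable W μ
  setIntegral_eq : ∀ A, MeasurableSet[𝓔] A → ∫ ω in Φ ⁻¹' A, Y ω ∂P = ∫ z in A, W z ∂μ

namespace HasDensityAlong

section Basic

variable {Ω E : Type*} [mΩ : MeasurableSpace Ω] {𝓔 𝓔' mE : MeasurableSpace E}
  {P : Measure Ω} {Φ : Ω → E} {Y Y' : Ω → ℝ} {μ : Measure E} {W W' : E → ℝ}

theorem mono (h : HasDensityAlong P Φ Y μ 𝓔' W) (h𝓔 : 𝓔 ≤ 𝓔') : HasDensityAlong P Φ Y μ 𝓔 W :=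
  ⟨h.integrable, h.integrable_density, fun A hA => h.setIntegral_eq A (h𝓔 A hA)⟩

theorem neg (h : HasDensityAlong P Φ Y μ 𝓔 W) : HasDensityAlong P Φ (-Y) μ 𝓔 (-W) :=
  ⟨h.integrable.neg, h.integrable_density.neg, fun A hA => by
    simp only [Pi.neg_apply, integral_neg, h.setIntegral_eq A hA]⟩

theorem sub (h : HasDensityAlong P Φ Y μ 𝓔 W) (h' : HasDensityAlong P Φ Y' μ 𝓔 W') :
    HasDensityAlong P Φ (Y - Y') μ 𝓔 (W - W') :=
  ⟨h.integrable.sub h'.integrable, h.integrable_density.sub h'.integrable_density, fun A hA => by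
    simp only [Pi.sub_apply]
    rw [integral_sub h.integrable.integrableOn h'.integrable.integrableOn,
      integral_sub h.integrable_density.integrableOn h'.integrable_density.integrableOn,
      h.setIntegral_eq A hA, h'.setIntegral_eq A hA]⟩

theorem sum {ι : Type*} {s : Finset ι} {Y : ι → Ω → ℝ} {W : ι → E → ℝ}
    (h : ∀ i ∈ s, HasDensityAlong P Φ (Y i) μ 𝓔 (W i)) :
    HasDensityAlong P Φ (fun ω => ∑ i ∈ s, Y i ω) μ 𝓔 fun z => ∑ i ∈ s, W i z :=
  ⟨integrable_finsetSum s fun i hi => (h i hi).integrable,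
    integrable_finsetSum s fun i hi => (h i hi).integrable_density, fun A hA => by
    rw [integral_finsetSum s fun i hi => (h i hi).integrable.integrableOn,
      integral_finsetSum s fun i hi => (h i hi).integrable_density.integrableOn]
    exact Finset.sum_congr rfl fun i hi => (h i hi).setIntegral_eq A hA⟩

theorem condExp_comap_ae_eq [IsFiniteMeasure P] (hΦ : Measurable[mΩ, 𝓔] Φ)
    (h : HasDensityAlong P Φ Y μ 𝓔 W) (h' : HasDensityAlong P Φ Y' μ 𝓔 W) :
    P[Y | 𝓔.comap Φ] =ᵐ[P] P[Y' | 𝓔.comap Φ] := by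
  refine ae_eq_condExp_of_forall_setIntegral_eq hΦ.comap_le h'.integrable
    (fun _ _ _ => integrable_condExp.integrableOn) ?_
    stronglyMeasurable_condExp.aestronglyMeasurable
  rintro _ ⟨A, hA, rfl⟩ -
  rw [setIntegral_condExp hΦ.comap_le h.integrable ⟨A, hA, rfl⟩, h.setIntegral_eq A hA,
    h'.setIntegral_eq A hA]

theorem map_withDensity_eq (h : HasDensityAlong P Φ Y μ mE W) (hΦ : Measurable Φ)
    (hY : 0 ≤ᵐ[P] Y) (hW : 0 ≤ᵐ[μ] W) :
    (P.withDensity fun ω => ENNReal.ofReal (Y ω)).map Φ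
      = μ.withDensity fun z => ENNReal.ofReal (W z) := by
  ext A hA
  rw [Measure.map_apply hΦ hA, withDensity_apply _ (hΦ hA), withDensity_apply _ hA,
    ← ofReal_integral_eq_lintegral_ofReal h.integrable.integrableOn (ae_restrict_of_ae hY),
    ← ofReal_integral_eq_lintegral_ofReal h.integrable_density.integrableOn (ae_restrict_of_ae hW),
    h.setIntegral_eq A hA]

theorem trim (h : HasDensityAlong P Φ Y μ 𝓔 W) (h𝓔 : 𝓔 ≤ mE) (hW : Measurable[𝓔] W) :
    HasDensityAlong P Φ Y (μ.trim h𝓔) 𝓔 W :=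
  ⟨h.integrable, h.integrable_density.trim h𝓔 hW.stronglyMeasurable, fun A hA => by
    rw [h.setIntegral_eq A hA, setIntegral_trim h𝓔 hW.stronglyMeasurable hA]⟩

end Basic

section Weight

variable {Ω E : Type*} [mΩ : MeasurableSpace Ω] {𝓔 mE : MeasurableSpace E} {P : Measure Ω}
  {Φ : Ω → E} {Y : Ω → ℝ} {μ : Measure E} {W g : E → ℝ}

theorem integrable_mul_iff (h : HasDensityAlong P Φ Y μ mE W) (hΦ : Measurable Φ) (hY : 0 ≤ Y)
    (hW : 0 ≤ W) (hg : Measurable g) :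
    Integrable (fun ω => g (Φ ω) * Y ω) P ↔ Integrable (fun z => g z * W z) μ := by
  have h_map := integrable_map_measure (μ := P.withDensity fun ω => ENNReal.ofReal (Y ω))
    hg.aestronglyMeasurable hΦ.aemeasurable
  rw [h.map_withDensity_eq hΦ (ae_of_all _ hY) (ae_of_all _ hW),
    integrable_withDensity_iff_integrable_smul₀'
      h.integrable_density.aestronglyMeasurable.aemeasurable.ennreal_ofReal
      (ae_of_all _ fun _ => ENNReal.ofReal_lt_top),
    integrable_withDensity_iff_integrable_smul₀'
      h.integrable.aestronglyMeasurable.aemeasurable.ennreal_ofReal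
      (ae_of_all _ fun _ => ENNReal.ofReal_lt_top)] at h_map
  simpa only [ENNReal.toReal_ofReal (hY _), ENNReal.toReal_ofReal (hW _), smul_eq_mul, mul_comm,
    Function.comp_apply] using h_map.symm

theorem setIntegral_mul_eq (h : HasDensityAlong P Φ Y μ mE W) (hΦ : Measurable Φ) (hY : 0 ≤ Y)
    (hW : 0 ≤ W) (hg : Measurable g) {A : Set E} (hA : MeasurableSet A) :
    ∫ ω in Φ ⁻¹' A, g (Φ ω) * Y ω ∂P = ∫ z in A, g z * W z ∂μ := by
  have h_map := setIntegral_map (μ := P.withDensity fun ω => ENNReal.ofReal (Y ω)) hA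
    hg.aestronglyMeasurable hΦ.aemeasurable
  rw [h.map_withDensity_eq hΦ (ae_of_all _ hY) (ae_of_all _ hW), restrict_withDensity hA,
    restrict_withDensity (hΦ hA), integral_withDensity_eq_integral_toReal_smul₀
      h.integrable_density.aestronglyMeasurable.aemeasurable.ennreal_ofReal.restrict
      (ae_of_all _ fun _ => ENNReal.ofReal_lt_top),
    integral_withDensity_eq_integral_toReal_smul₀
      h.integrable.aestronglyMeasurable.aemeasurable.ennreal_ofReal.restrict
      (ae_of_all _ fun _ => ENNReal.ofReal_lt_top)] at h_map
  simpa only [ENNReal.toReal_ofReal (hY _), ENNReal.toReal_ofReal (hW _), smul_eq_mul, mul_comm]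
    using h_map.symm

theorem comp_mul (h : HasDensityAlong P Φ Y μ 𝓔 W) (hΦ : Measurable[mΩ, 𝓔] Φ) (h𝓔 : 𝓔 ≤ mE)
    (hY : 0 ≤ Y) (hW : Measurable[𝓔] W) (hW0 : 0 ≤ W) (hg : Measurable[𝓔] g)
    (hgW : Integrable (fun z => g z * W z) μ) :
    HasDensityAlong P Φ (fun ω => g (Φ ω) * Y ω) μ 𝓔 fun z => g z * W z := by
  have h_meas : StronglyMeasurable[𝓔] fun z => g z * W z := (hg.mul hW).stronglyMeasurable
  have h_trim := h.trim h𝓔 hW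
  refine ⟨(h_trim.integrable_mul_iff hΦ hY hW0 hg).2 (hgW.trim h𝓔 h_meas), hgW, fun A hA => ?_⟩
  rw [h_trim.setIntegral_mul_eq hΦ hY hW0 hg hA, setIntegral_trim h𝓔 h_meas hA]

theorem integrable_mul_density (h : HasDensityAlong P Φ Y μ 𝓔 W) (hΦ : Measurable[mΩ, 𝓔] Φ)
    (h𝓔 : 𝓔 ≤ mE) (hY : 0 ≤ Y) (hW : Measurable[𝓔] W) (hW0 : 0 ≤ W) (hg : Measurable[𝓔] g)
    (hgY : Integrable (fun ω => g (Φ ω) * Y ω) P) : Integrable (fun z => g z * W z) μ :=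
  integrable_of_integrable_trim h𝓔 (((h.trim h𝓔 hW).integrable_mul_iff hΦ hY hW0 hg).1 hgY)

end Weight

section Bayes

variable {Ω E : Type*} [mΩ : MeasurableSpace Ω] {𝓔 mE : MeasurableSpace E} {P : Measure Ω}
  {Φ : Ω → E} {D : Set Ω} {Y : Ω → ℝ} {μ : Measure E} {N W : E → ℝ}

theorem measure_density_eq_zero [IsFiniteMeasure P]
    (hN : HasDensityAlong P Φ (D.indicator 1) μ 𝓔 N) (hN_meas : Measurable[𝓔] N)
    (hD : MeasurableSet D) : P {ω | ω ∈ D ∧ N (Φ ω) = 0} = 0 := by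
  have h_zero : MeasurableSet[𝓔] {z | N z = 0} := hN_meas (measurableSet_singleton 0)
  have h_int := hN.setIntegral_eq _ h_zero
  have h_int_zero : ∫ z in {z | N z = 0}, N z ∂μ = 0 :=
    setIntegral_eq_zero_of_forall_eq_zero fun _ hz => hz
  rw [setIntegral_indicator hD, h_int_zero] at h_int
  have h_eq : {ω | ω ∈ D ∧ N (Φ ω) = 0} = Φ ⁻¹' {z | N z = 0} ∩ D := by
    ext; exact and_comm
  rw [h_eq]
  simpa [measureReal_def, ENNReal.toReal_eq_zero_iff, measure_ne_top] using h_int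

theorem density_div_mul_cancel [IsFiniteMeasure P]
    (hN : HasDensityAlong P Φ (D.indicator 1) μ 𝓔 N) (hY : HasDensityAlong P Φ Y μ 𝓔 W)
    (hΦ : Measurable[mΩ, 𝓔] Φ) (h𝓔 : 𝓔 ≤ mE) (hD : MeasurableSet D) (hN_meas : Measurable[𝓔] N)
    (hW_meas : Measurable[𝓔] W) (hYD : ∀ ω ∉ D, Y ω = 0) :
    HasDensityAlong P Φ Y μ 𝓔 fun z => W z / N z * N z := by
  refine ⟨hY.integrable, hY.integrable_density.mono
    (((hW_meas.div hN_meas).mul hN_meas).mono h𝓔 le_rfl).aestronglyMeasurable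
    (ae_of_all _ fun z => ?_), fun A hA => ?_⟩
  · by_cases hz : N z = 0
    · simp [hz]
    · rw [div_mul_cancel₀ _ hz]
  have h_pos : MeasurableSet[𝓔] (A ∩ {z | N z ≠ 0}) :=
    hA.inter (hN_meas (measurableSet_singleton 0).compl)
  have h_null : ∀ᵐ ω ∂P, ¬(ω ∈ D ∧ N (Φ ω) = 0) :=
    measure_eq_zero_iff_ae_notMem.1 (hN.measure_density_eq_zero hN_meas hD)
  calc ∫ ω in Φ ⁻¹' A, Y ω ∂P = ∫ ω in Φ ⁻¹' (A ∩ {z | N z ≠ 0}), Y ω ∂P := by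
        refine setIntegral_eq_of_subset_of_ae_sdiff_eq_zero (hΦ hA).nullMeasurableSet
          (preimage_mono inter_subset_left) ?_
        filter_upwards [h_null] with ω hω hωA
        by_contra hY_ne
        exact hωA.2 ⟨hωA.1, fun hNω => hω ⟨by_contra fun hωD => hY_ne (hYD ω hωD), hNω⟩⟩
    _ = ∫ z in A ∩ {z | N z ≠ 0}, W z ∂μ := hY.setIntegral_eq _ h_pos
    _ = ∫ z in A ∩ {z | N z ≠ 0}, W z / N z * N z ∂μ :=
        setIntegral_congr_fun (h𝓔 _ h_pos) fun z hz => (div_mul_cancel₀ _ hz.2).symm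
    _ = ∫ z in A, W z / N z * N z ∂μ := by
        symm
        refine setIntegral_eq_of_subset_of_forall_sdiff_eq_zero (h𝓔 A hA) inter_subset_left
          fun z hz => ?_
        rw [not_not.1 fun hNz => hz.2 ⟨hz.1, hNz⟩, mul_zero]

theorem indicator_div [IsFiniteMeasure P]
    (hN : HasDensityAlong P Φ (D.indicator 1) μ 𝓔 N) (hY : HasDensityAlong P Φ Y μ 𝓔 W)
    (hΦ : Measurable[mΩ, 𝓔] Φ) (h𝓔 : 𝓔 ≤ mE) (hD : MeasurableSet D) (hN_meas : Measurable[𝓔] N)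
    (hN0 : 0 ≤ N) (hW_meas : Measurable[𝓔] W) (hYD : ∀ ω ∉ D, Y ω = 0) :
    HasDensityAlong P Φ (D.indicator fun ω => W (Φ ω) / N (Φ ω)) μ 𝓔 fun z => W z / N z * N z := by
  convert hN.comp_mul hΦ h𝓔 (indicator_nonneg fun _ _ => zero_le_one) hN_meas hN0
    (hW_meas.div hN_meas)
    (hN.density_div_mul_cancel hY hΦ h𝓔 hD hN_meas hW_meas hYD).integrable_density using 1
  · ext ω
    by_cases hω : ω ∈ D <;> simp [hω]
  · rfl

theorem condExp_ae_eq_indicator_div [IsFiniteMeasure P]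
    (hN : HasDensityAlong P Φ (D.indicator 1) μ 𝓔 N) (hY : HasDensityAlong P Φ Y μ 𝓔 W)
    (hΦ : Measurable[mΩ, 𝓔] Φ) (h𝓔 : 𝓔 ≤ mE) (hD : MeasurableSet D) (hN_meas : Measurable[𝓔] N)
    (hN0 : 0 ≤ N) (hW_meas : Measurable[𝓔] W) (hYD : ∀ ω ∉ D, Y ω = 0) :
    P[Y | 𝓔.comap Φ] =ᵐ[P] P[D.indicator fun ω => W (Φ ω) / N (Φ ω) | 𝓔.comap Φ] :=
  (hN.density_div_mul_cancel hY hΦ h𝓔 hD hN_meas hW_meas hYD).condExp_comap_ae_eq hΦ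
    (hN.indicator_div hY hΦ h𝓔 hD hN_meas hN0 hW_meas hYD)

end Bayes

end HasDensityAlong

theorem prod_le_prod_left {α β : Type*} {m m' : MeasurableSpace α} {mβ : MeasurableSpace β}
    (h : m ≤ m') : m.prod mβ ≤ m'.prod mβ :=
  sup_le_sup_right (MeasurableSpace.comap_mono h) _

theorem comap_diag_prod {α : Type*} (m m' : MeasurableSpace α) :
    (m.prod m').comap (fun a => (a, a)) = m ⊔ m' := by
  rw [MeasurableSpace.comap_prodMk]
  exact congrArg₂ _ MeasurableSpace.comap_id MeasurableSpace.comap_id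

/-- Jacod's density hypothesis at a fixed time: `l ↦ p (ω, l)` is the density of the conditional law
of `L` given `m` with respect to the law of `L`, jointly measurable in `(ω, l)`. -/
structure IsJacodDensity {Ω E : Type*} (m : MeasurableSpace Ω) {mΩ : MeasurableSpace Ω}
    [mE : MeasurableSpace E] (P : Measure Ω) (L : Ω → E) (p : Ω × E → ℝ) : Prop where
  nonneg : 0 ≤ p
  measurable : Measurable[m.prod mE] p
  condExp_ae_eq : ∀ f : E → ℝ, Measurable f → (∃ C, ∀ x, |f x| ≤ C) →
    P[fun ω => f (L ω) | m] =ᵐ[P] fun ω => ∫ x, f x * p (ω, x) ∂(P.map L)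

namespace IsJacodDensity

variable {Ω E : Type*} {m mΩ : MeasurableSpace Ω} {mE : MeasurableSpace E} {P : Measure Ω}
  [IsFiniteMeasure P] {L : Ω → E} {p : Ω × E → ℝ}

theorem ae_integrable (h : IsJacodDensity m P L p) (hm : m ≤ mΩ) :
    ∀ᵐ ω ∂P, Integrable (fun x => p (ω, x)) (P.map L) := by
  have h_one := h.condExp_ae_eq (fun _ => 1) measurable_const ⟨1, by simp⟩
  rw [condExp_const hm] at h_one
  filter_upwards [h_one] with ω hω
  refine Integrable.of_integral_ne_zero ?_
  simp only [one_mul] at hω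
  exact hω ▸ one_ne_zero

theorem measure_inter_preimage (h : IsJacodDensity m P L p) (hm : m ≤ mΩ) (hL : Measurable L)
    {A : Set Ω} {C : Set E} (hA : MeasurableSet[m] A) (hC : MeasurableSet C) :
    P (A ∩ L ⁻¹' C) = ∫⁻ ω in A, ∫⁻ x in C, ENNReal.ofReal (p (ω, x)) ∂(P.map L) ∂P := by
  set f : E → ℝ := C.indicator 1 with hf
  have hf_nonneg (x : E) : 0 ≤ f x := indicator_nonneg (fun _ _ => zero_le_one) x
  have hf_int : Integrable (fun ω => f (L ω)) P :=
    (integrable_const (1 : ℝ)).indicator (hL hC)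
  have h_cond := h.condExp_ae_eq f (measurable_one.indicator hC)
    ⟨1, fun x => by by_cases hx : x ∈ C <;> simp [hf, hx]⟩
  have h_inner : ∀ᵐ ω ∂P, ENNReal.ofReal ((P[fun ω => f (L ω) | m]) ω)
      = ∫⁻ x in C, ENNReal.ofReal (p (ω, x)) ∂(P.map L) := by
    filter_upwards [h.ae_integrable hm, h_cond] with ω hω_int hω
    have h_mul : (fun x => f x * p (ω, x)) = C.indicator fun x => p (ω, x) := by
      ext x
      by_cases hx : x ∈ C <;> simp [hf, hx]
    rw [hω, h_mul, integral_indicator hC, ofReal_integral_eq_lintegral_ofReal hω_int.integrableOn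
      (ae_of_all _ fun x => h.nonneg _)]
  rw [← lintegral_congr_ae (ae_restrict_of_ae h_inner), ← ofReal_integral_eq_lintegral_ofReal
    integrable_condExp.integrableOn
    (ae_restrict_of_ae (condExp_nonneg (ae_of_all _ fun ω => hf_nonneg (L ω)))),
    setIntegral_condExp hm hf_int hA]
  change _ = ENNReal.ofReal (∫ ω in A, (L ⁻¹' C).indicator (fun _ => (1 : ℝ)) ω ∂P)
  rw [setIntegral_indicator (hL hC)]
  simp

theorem measure_graph_preimage (h : IsJacodDensity m P L p) (hm : m ≤ mΩ) (hL : Measurable L)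
    {A : Set (Ω × E)} (hA : MeasurableSet[m.prod mE] A) :
    P {ω | (ω, L ω) ∈ A} = ∫⁻ z in A, ENNReal.ofReal (p z) ∂(P.prod (P.map L)) := by
  have h_le : m.prod mE ≤ mΩ.prod mE := prod_le_prod_left hm
  have h_graph : Measurable[mΩ, m.prod mE] fun ω => (ω, L ω) :=
    (measurable_id.prodMk hL).mono le_rfl h_le
  let μ : Measure[mΩ.prod mE] (Ω × E) :=
    (P.prod (P.map L)).withDensity fun z => ENNReal.ofReal (p z)
  have h_rect {s : Set Ω} {t : Set E} (hs : MeasurableSet[m] s) (ht : MeasurableSet t) :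
      (@Measure.map _ _ mΩ (m.prod mE) (fun ω => (ω, L ω)) P) (s ×ˢ t) = μ.trim h_le (s ×ˢ t) := by
    have hst : MeasurableSet[m.prod mE] (s ×ˢ t) := hs.prod ht
    rw [Measure.map_apply h_graph hst, trim_measurableSet_eq h_le hst,
      withDensity_apply _ (h_le _ hst), ← Measure.prod_restrict, lintegral_prod _
        (h.measurable.mono h_le le_rfl).ennreal_ofReal.aemeasurable,
      ← h.measure_inter_preimage hm hL hs ht]
    rfl
  have h_eq := @Measure.ext_prod _ _ m mE _ _ _ h_rect
  rw [← withDensity_apply _ (h_le _ hA), ← trim_measurableSet_eq h_le hA, ← h_eq,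
    Measure.map_apply h_graph hA]
  rfl

theorem hasDensityAlong (h : IsJacodDensity m P L p) (hm : m ≤ mΩ) (hL : Measurable L) :
    HasDensityAlong P (fun ω => (ω, L ω)) 1 (P.prod (P.map L)) (m.prod mE) p := by
  have h_meas : Measurable p := h.measurable.mono (prod_le_prod_left hm) le_rfl
  have h_nonneg (A : Set (Ω × E)) : 0 ≤ᵐ[(P.prod (P.map L)).restrict A] p :=
    ae_of_all _ h.nonneg
  have h_int : Integrable p (P.prod (P.map L)) := by
    refine ⟨h_meas.aestronglyMeasurable, ?_⟩
    rw [hasFiniteIntegral_iff_ofReal (ae_of_all _ h.nonneg), ← setLIntegral_univ,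
      ← h.measure_graph_preimage hm hL MeasurableSet.univ]
    exact measure_lt_top _ _
  refine ⟨integrable_const 1, h_int, fun A hA => ?_⟩
  rw [integral_eq_lintegral_of_nonneg_ae (h_nonneg A) h_meas.aestronglyMeasurable,
    ← h.measure_graph_preimage hm hL hA]
  simp [measureReal_def, preimage]

theorem hasDensityAlong_comp (h : IsJacodDensity m P L p) (hm : m ≤ mΩ) (hL : Measurable L)
    {f : Ω × E → ℝ} (hf : Measurable[m.prod mE] f) (hf_int : Integrable (fun ω => f (ω, L ω)) P) :
    HasDensityAlong P (fun ω => (ω, L ω)) (fun ω => f (ω, L ω)) (P.prod (P.map L)) (m.prod mE)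
      fun z => f z * p z := by
  have h_le : m.prod mE ≤ mΩ.prod mE := prod_le_prod_left hm
  have h_graph : Measurable[mΩ, m.prod mE] fun ω => (ω, L ω) :=
    (measurable_id.prodMk hL).mono le_rfl h_le
  have h_dens := h.hasDensityAlong hm hL
  simpa only [Pi.one_apply, mul_one] using h_dens.comp_mul h_graph h_le zero_le_one h.measurable
    h.nonneg hf (h_dens.integrable_mul_density h_graph h_le zero_le_one h.measurable h.nonneg hf
      (by simpa only [Pi.one_apply, mul_one] using hf_int))

theorem of_indep (hm : m ≤ mΩ) (hL : Measurable L) (h_indep : Indep (mE.comap L) m P) :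
    IsJacodDensity m P L fun _ => 1 where
  nonneg := fun _ => zero_le_one
  measurable := @measurable_const _ _ (_) _ 1
  condExp_ae_eq f hf _ := by
    filter_upwards [condExp_indep_eq hL.comap_le hm
      (hf.comp (comap_measurable L)).stronglyMeasurable h_indep] with ω hω
    simp only [mul_one, integral_map hL.aemeasurable hf.aestronglyMeasurable]
    exact hω

end IsJacodDensity

theorem setIntegral_prod_eq_integral_section {α β : Type*} {mα : MeasurableSpace α}
    {mβ : MeasurableSpace β} {μ : Measure α} {ν : Measure β} [SFinite μ] [SFinite ν]
    {f : α × β → ℝ} {A : Set (α × β)} (hf : IntegrableOn f A (μ.prod ν)) (hA : MeasurableSet A) :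
    ∫ z in A, f z ∂(μ.prod ν) = ∫ y, ∫ x in {x | (x, y) ∈ A}, f (x, y) ∂μ ∂ν := by
  rw [← integral_indicator hA, integral_prod_symm _ (hf.integrable_indicator hA)]
  refine integral_congr_ae (ae_of_all _ fun y => ?_)
  exact integral_indicator (f := fun x => f (x, y)) (measurable_prodMk_right hA)

namespace HasDensityAlong

section Change

variable {Ω E G : Type*} {mΩ : MeasurableSpace Ω} {𝓔 mE : MeasurableSpace E}
  {𝓖 mG : MeasurableSpace G} {P : Measure Ω} {μ : Measure E} {Φ : Ω → E} {Y : Ω → ℝ} {W : E → ℝ}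

theorem of_withDensity {q : E → ℝ} (hq : Measurable q) (hq0 : 0 ≤ q)
    (h : HasDensityAlong P Φ Y (μ.withDensity fun z => ENNReal.ofReal (q z)) 𝓔 W) (h𝓔 : 𝓔 ≤ mE) :
    HasDensityAlong P Φ Y μ 𝓔 fun z => W z * q z := by
  have h_lt_top (z : E) : ENNReal.ofReal (q z) < ⊤ := ENNReal.ofReal_lt_top
  refine ⟨h.integrable, ?_, fun A hA => ?_⟩
  · have h_int := h.integrable_density
    rw [integrable_withDensity_iff hq.ennreal_ofReal (ae_of_all _ h_lt_top)] at h_int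
    simpa only [ENNReal.toReal_ofReal (hq0 _)] using h_int
  · rw [h.setIntegral_eq A hA, restrict_withDensity (h𝓔 A hA),
      integral_withDensity_eq_integral_toReal_smul hq.ennreal_ofReal (ae_of_all _ h_lt_top)]
    simp only [ENNReal.toReal_ofReal (hq0 _), smul_eq_mul, mul_comm]

theorem comp_of_leftInverse {μ' : Measure G} {ψ : E → G} {χ : G → E}
    (h : HasDensityAlong P Φ Y μ 𝓔 W) (h𝓔 : 𝓔 ≤ mE) (hψ : Measurable[𝓔, 𝓖] ψ)
    (hχ : MeasurePreserving χ μ' μ) (hψχ : Function.LeftInverse ψ χ) :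
    HasDensityAlong P (fun ω => ψ (Φ ω)) Y μ' 𝓖 fun z => W (χ z) := by
  refine ⟨h.integrable, hχ.integrable_comp_of_integrable h.integrable_density, fun A hA => ?_⟩
  have h_preimage : A = χ ⁻¹' (ψ ⁻¹' A) := by
    rw [← preimage_comp, hψχ.comp_eq_id, preimage_id]
  have hW := h.integrable_density.aestronglyMeasurable
  calc ∫ ω in (fun ω => ψ (Φ ω)) ⁻¹' A, Y ω ∂P = ∫ z in ψ ⁻¹' A, W z ∂μ :=
        h.setIntegral_eq _ (hψ hA)
    _ = ∫ z in A, W (χ z) ∂μ' := by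
        rw [← hχ.map_eq] at hW ⊢
        rw [setIntegral_map (h𝓔 _ (hψ hA)) hW hχ.aemeasurable, ← h_preimage]

theorem fst {ν : Measure G} [SFinite μ] [SFinite ν] {Φ : Ω → E × G} {W : E × G → ℝ}
    (h : HasDensityAlong P Φ Y (μ.prod ν) (𝓔.prod mG) W) :
    HasDensityAlong P (fun ω => (Φ ω).1) Y μ 𝓔 fun z => ∫ y, W (z, y) ∂ν := by
  refine ⟨h.integrable, h.integrable_density.integral_prod_left, fun A hA => ?_⟩
  have h_eq := h.setIntegral_eq (A ×ˢ univ) (hA.prod MeasurableSet.univ)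
  rw [setIntegral_prod _ h.integrable_density.integrableOn] at h_eq
  rw [prod_univ, Measure.restrict_univ] at h_eq
  exact h_eq

theorem prodMk_of_indep {m mΩ : MeasurableSpace Ω} {P : Measure Ω} [IsFiniteMeasure P] [SFinite μ]
    {e : Ω → G}
    (h : HasDensityAlong P Φ Y μ 𝓔 W) (h𝓔 : 𝓔 ≤ mE) (hm : m ≤ mΩ) (hY : Measurable[m] Y)
    (hΦ : Measurable[m, 𝓔] Φ) (he : Measurable e) (h_indep : Indep (mG.comap e) m P) :
    HasDensityAlong P (fun ω => (Φ ω, e ω)) Y (μ.prod (P.map e)) (𝓔.prod mG) fun z => W z.1 := by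
  have h_law : HasDensityAlong P (fun ω => (ω, e ω)) Y (P.prod (P.map e)) (m.prod mG)
      fun z => Y z.1 := by
    simpa only [mul_one] using (IsJacodDensity.of_indep hm he h_indep).hasDensityAlong_comp hm he
      (f := fun z => Y z.1) (hY.comp measurable_fst) h.integrable
  refine ⟨h.integrable, h.integrable_density.comp_fst _, fun A hA => ?_⟩
  have hA' : MeasurableSet[m.prod mG] {z : Ω × G | (Φ z.1, z.2) ∈ A} :=
    ((hΦ.comp measurable_fst).prodMk measurable_snd) hA
  calc ∫ ω in (fun ω => (Φ ω, e ω)) ⁻¹' A, Y ω ∂P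
      = ∫ z in {z : Ω × G | (Φ z.1, z.2) ∈ A}, Y z.1 ∂(P.prod (P.map e)) :=
        h_law.setIntegral_eq _ hA'
    _ = ∫ y, ∫ ω in Φ ⁻¹' {x | (x, y) ∈ A}, Y ω ∂P ∂(P.map e) :=
        setIntegral_prod_eq_integral_section h_law.integrable_density.integrableOn
          (prod_le_prod_left hm _ hA')
    _ = ∫ y, ∫ x in {x | (x, y) ∈ A}, W x ∂μ ∂(P.map e) :=
        integral_congr_ae <| ae_of_all _ fun y => h.setIntegral_eq _ (measurable_prodMk_right hA)
    _ = ∫ z in A, W z.1 ∂(μ.prod (P.map e)) :=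
        (setIntegral_prod_eq_integral_section (h.integrable_density.comp_fst _).integrableOn
          (prod_le_prod_left h𝓔 _ hA)).symm

end Change

theorem condExp_density {Ω Ω' E : Type*} {mΩ : MeasurableSpace Ω} {m mΩ' : MeasurableSpace Ω'}
    {mE : MeasurableSpace E} {P : Measure Ω} {P' : Measure Ω'} [IsFiniteMeasure P'] {ν : Measure E}
    [SFinite ν] {Φ : Ω → Ω' × E} {Y : Ω → ℝ} {W w : Ω' × E → ℝ} (hm : m ≤ mΩ')
    (h : HasDensityAlong P Φ Y (P'.prod ν) (m.prod mE) W)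
    (hw : AEStronglyMeasurable w (P'.prod ν))
    (hw_eq : ∀ᵐ x ∂ν, (fun ω => w (ω, x)) =ᵐ[P'] P'[fun ω => W (ω, x) | m]) :
    HasDensityAlong P Φ Y (P'.prod ν) (m.prod mE) w := by
  have hW_section := (integrable_prod_iff' h.integrable_density.aestronglyMeasurable).1
    h.integrable_density
  have hw_int : Integrable w (P'.prod ν) := by
    refine (integrable_prod_iff' hw).2
      ⟨?_, hW_section.2.mono hw.norm.prod_swap.integral_prod_right' ?_⟩
    · filter_upwards [hw_eq] with x hx using integrable_condExp.congr hx.symm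
    · filter_upwards [hw_eq] with x hx
      simp only [Real.norm_eq_abs, abs_of_nonneg (integral_nonneg fun _ => abs_nonneg _)]
      rw [integral_congr_ae (hx.mono fun ω hω => congrArg abs hω)]
      exact integral_abs_condExp_le _
  refine ⟨h.integrable, hw_int, fun A hA => ?_⟩
  have hA' := prod_le_prod_left hm _ hA
  rw [h.setIntegral_eq A hA,
    setIntegral_prod_eq_integral_section h.integrable_density.integrableOn hA',
    setIntegral_prod_eq_integral_section hw_int.integrableOn hA']
  refine integral_congr_ae ?_
  filter_upwards [hw_eq, hW_section.1] with x hx hx_int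
  rw [integral_congr_ae (ae_restrict_of_ae hx)]
  exact (setIntegral_condExp hm hx_int (measurable_prodMk_right hA)).symm

end HasDensityAlong

theorem condExp_sup_of_indep {Ω : Type*} {m₁ m₂ m₃ mΩ : MeasurableSpace Ω} {P : Measure Ω}
    [IsFiniteMeasure P] {f : Ω → ℝ} (h₁₃ : m₁ ≤ m₃) (h₂ : m₂ ≤ mΩ) (h₃ : m₃ ≤ mΩ)
    (h_indep : Indep m₂ m₃ P) (hf : Measurable[m₃] f) (hf_int : Integrable f P) :
    P[f | m₁ ⊔ m₂] =ᵐ[P] P[f | m₁] := by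
  have h₁ := h₁₃.trans h₃
  have h_cond : HasDensityAlong P id (P[f | m₁]) P m₁ (P[f | m₁]) :=
    ⟨integrable_condExp, integrable_condExp, fun _ _ => rfl⟩
  have h_self : HasDensityAlong P id f P m₁ (P[f | m₁]) :=
    ⟨hf_int, integrable_condExp, fun A hA => (setIntegral_condExp h₁ hf_int hA).symm⟩
  have h_diag_meas : Measurable[mΩ, m₁.prod m₂] fun ω => (ω, ω) :=
    (measurable_id'' h₁).prodMk (measurable_id'' h₂)
  have h_id : Indep (m₂.comap id) m₃ P := by rwa [MeasurableSpace.comap_id]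
  have h_eq := (h_self.prodMk_of_indep (mG := m₂) h₁ h₃ hf (measurable_id'' h₁₃)
    (measurable_id'' h₂) h_id).condExp_comap_ae_eq h_diag_meas
    (h_cond.prodMk_of_indep (mG := m₂) h₁ h₃
      (stronglyMeasurable_condExp.measurable.mono h₁₃ le_rfl) (measurable_id'' h₁₃)
      (measurable_id'' h₂) h_id)
  rw [comap_diag_prod] at h_eq
  exact h_eq.trans (Filter.EventuallyEq.of_eq (condExp_of_stronglyMeasurable (sup_le h₁ h₂)
    (stronglyMeasurable_condExp.mono le_sup_left) integrable_condExp))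

section Noise

variable {Ω G : Type*} [AddCommGroup G] [mG : MeasurableSpace G]

/-- The kernel `k` smoothed by a noise with density `q`: when `L` has law `ν`, this turns a density
along `(ω, L ω)` into one along `(ω, L ω + e ω)`. -/
def noiseSmoothing (ν : Measure G) (q : G → ℝ) (k : Ω × G → ℝ) (z : Ω × G) : ℝ :=
  ∫ l, k (z.1, l) * q (z.2 - l) ∂ν

theorem measurable_noiseSmoothing [MeasurableSub₂ G] {m : MeasurableSpace Ω} {ν : Measure G}
    [SFinite ν] {q : G → ℝ} {k : Ω × G → ℝ} (hq : Measurable q) (hk : Measurable k) :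
    Measurable (noiseSmoothing ν q k) :=
  (StronglyMeasurable.integral_prod_right' (f := fun x : (Ω × G) × G =>
    k (x.1.1, x.2) * q (x.1.2 - x.2)) (Measurable.stronglyMeasurable (by fun_prop))).measurable

theorem noiseSmoothing_neg {ν : Measure G} {q : G → ℝ} {k : Ω × G → ℝ} :
    noiseSmoothing ν q (-k) = -noiseSmoothing ν q k := by
  ext z
  simp only [noiseSmoothing, Pi.neg_apply, neg_mul, integral_neg]

theorem measurePreserving_noise_shift [MeasurableAdd G] [MeasurableSub₂ G]
    {mΩ : MeasurableSpace Ω} {P : Measure Ω} {ν ρ : Measure G} [SFinite P] [SFinite ν] [SFinite ρ]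
    [ρ.IsAddRightInvariant] :
    MeasurePreserving (fun z : (Ω × G) × G => ((z.1.1, z.2), z.1.2 - z.2))
      ((P.prod ρ).prod ν) ((P.prod ν).prod ρ) := by
  have h_swap : MeasurePreserving (fun z : (Ω × G) × G => ((z.1.1, z.2), z.1.2))
      ((P.prod ρ).prod ν) ((P.prod ν).prod ρ) :=
    (measurePreserving_prodAssoc P ν ρ).symm.comp
      (((MeasurePreserving.id P).prod Measure.measurePreserving_swap).comp
        (measurePreserving_prodAssoc P ρ ν))
  have h_shift : MeasurePreserving (fun z : (Ω × G) × G => (z.1, z.2 - z.1.2))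
      ((P.prod ν).prod ρ) ((P.prod ν).prod ρ) :=
    (MeasurePreserving.id _).skew_product (g := fun (a : Ω × G) x => x - a.2) (by fun_prop)
      (ae_of_all _ fun a => (measurePreserving_sub_right ρ a.2).map_eq)
  exact h_shift.comp h_swap

theorem HasDensityAlong.add_noise [MeasurableAdd₂ G] [MeasurableSub₂ G]
    {m m' mΩ : MeasurableSpace Ω} {P : Measure Ω} [IsFiniteMeasure P] {ν ρ : Measure G} [SFinite ν]
    [SFinite ρ] [ρ.IsAddRightInvariant] {Y : Ω → ℝ} {L e : Ω → G} {q : G → ℝ} {w : Ω × G → ℝ}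
    (h : HasDensityAlong P (fun ω => (ω, L ω)) Y (P.prod ν) (m.prod mG) w) (hm : m ≤ m')
    (hm' : m' ≤ mΩ) (hY : Measurable[m'] Y) (hL : Measurable[m'] L) (he : Measurable e)
    (h_indep : Indep (mG.comap e) m' P) (hq : Measurable q) (hq0 : 0 ≤ q)
    (hq_density : P.map e = ρ.withDensity fun x => ENNReal.ofReal (q x)) :
    HasDensityAlong P (fun ω => (ω, L ω + e ω)) Y (P.prod ρ) (m.prod mG)
      (noiseSmoothing ν q w) := by
  have h_le : m.prod mG ≤ mΩ.prod mG := prod_le_prod_left (hm.trans hm')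
  have h_joint := h.prodMk_of_indep h_le hm' hY
    ((measurable_id'' hm).prodMk hL) he h_indep
  rw [hq_density, prod_withDensity_right hq.ennreal_ofReal] at h_joint
  have h_density := h_joint.of_withDensity (hq.comp measurable_snd) (fun z => hq0 z.2)
    (prod_le_prod_left h_le)
  refine (h_density.comp_of_leftInverse (ψ := fun z => ((z.1.1, z.1.2 + z.2), z.1.2))
    (𝓖 := (m.prod mG).prod mG) (prod_le_prod_left h_le) ?_ measurePreserving_noise_shift
    fun z => ?_).fst
  · exact ((measurable_fst.comp measurable_fst).prodMk
      ((measurable_snd.comp measurable_fst).add measurable_snd)).prodMk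
      (measurable_snd.comp measurable_fst)
  · simp only [add_sub_cancel, Prod.mk.eta]

end Noise

theorem indep_sup_of_indep_sup {Ω : Type*} {m₁ m₂ m₃ mΩ : MeasurableSpace Ω} {P : Measure Ω}
    [IsZeroOrProbabilityMeasure P] (h₁ : m₁ ≤ mΩ) (h₂ : m₂ ≤ mΩ) (h₃ : m₃ ≤ mΩ)
    (h_indep : Indep m₁ m₂ P) (h_indep_sup : Indep (m₁ ⊔ m₂) m₃ P) : Indep m₁ (m₂ ⊔ m₃) P := by
  have h_gen : m₂ ⊔ m₃ = MeasurableSpace.generateFrom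
      (preimage (fun ω => (ω, ω)) ''
        image2 (· ×ˢ ·) {B | MeasurableSet[m₂] B} {C | MeasurableSet[m₃] C}) := by
    rw [← MeasurableSpace.comap_generateFrom, @generateFrom_prod _ _ m₂ m₃]
    exact (comap_diag_prod m₂ m₃).symm
  refine IndepSets.indep h₁ (sup_le h₂ h₃) (@MeasurableSpace.isPiSystem_measurableSet _ m₁)
    ((@isPiSystem_prod _ _ m₂ m₃).comap fun ω => (ω, ω))
    (@MeasurableSpace.generateFrom_measurableSet _ m₁).symm h_gen ?_
  rw [IndepSets_iff]
  rintro A _ hA ⟨_, ⟨B, hB, C, hC, rfl⟩, rfl⟩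
  rw [Indep_iff] at h_indep h_indep_sup
  change P (A ∩ (B ∩ C)) = P A * P (B ∩ C)
  have h₂_le : m₂ ≤ m₁ ⊔ m₂ := le_sup_right
  have hAB : MeasurableSet[m₁ ⊔ m₂] (A ∩ B) :=
    .inter ((le_sup_left : m₁ ≤ m₁ ⊔ m₂) _ hA) (h₂_le _ hB)
  rw [← inter_assoc, h_indep_sup _ _ hAB hC, h_indep _ _ hA hB, h_indep_sup _ _ (h₂_le _ hB) hC,
    mul_assoc]

theorem condExp_ae_eq_of_comap_val_le {Ω : Type*} {m m' mΩ : MeasurableSpace Ω} {P : Measure Ω}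
    [IsFiniteMeasure P] {D : Set Ω} {f g : Ω → ℝ} (hm : m ≤ mΩ) (hm' : m' ≤ mΩ)
    (hD : MeasurableSet D)
    (h_trace : m'.comap (Subtype.val : D → Ω) ≤ m.comap (Subtype.val : D → Ω))
    (hf : Integrable f P) (hg : Integrable g P) (hfD : ∀ ω ∉ D, f ω = 0) (hgD : ∀ ω ∉ D, g ω = 0)
    (h : P[f | m] =ᵐ[P] P[g | m]) : P[f | m'] =ᵐ[P] P[g | m'] := by
  refine ae_eq_condExp_of_forall_setIntegral_eq hm' hg
    (fun _ _ _ => integrable_condExp.integrableOn) ?_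
    stronglyMeasurable_condExp.aestronglyMeasurable
  intro A hA _
  obtain ⟨A', hA', hAA'⟩ := h_trace _ ⟨A, hA, rfl⟩
  have h_inter : A ∩ D = A' ∩ D := by
    simpa only [inter_comm D] using (Subtype.preimage_val_eq_preimage_val_iff _ _ _).1 hAA'.symm
  have h_set {k : Ω → ℝ} (hkD : ∀ ω ∉ D, k ω = 0) : ∫ ω in A, k ω ∂P = ∫ ω in A', k ω ∂P := by
    have hk : D.indicator k = k :=
      indicator_eq_self.2 fun ω hω => by_contra fun hωD => hω (hkD ω hωD)
    rw [← hk, setIntegral_indicator hD, setIntegral_indicator hD, h_inter]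
  rw [setIntegral_condExp hm' hf hA, h_set hfD, h_set hgD, ← setIntegral_condExp hm hf hA',
    ← setIntegral_condExp hm hg hA']
  exact integral_congr_ae (ae_restrict_of_ae h)

theorem comap_val_sup_defaultSigma {Ω : Type*} {m : MeasurableSpace Ω} (τ : Ω → ℝ≥0) (t : ℝ≥0) :
    (m ⊔ defaultSigma τ t).comap (Subtype.val : {ω | t < τ ω} → Ω) = m.comap Subtype.val := by
  have h_bot : (defaultSigma τ t).comap (Subtype.val : {ω | t < τ ω} → Ω) = ⊥ := by
    rw [defaultSigma, MeasurableSpace.comap_generateFrom, eq_bot_iff]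
    refine MeasurableSpace.generateFrom_le ?_
    rintro _ ⟨_, ⟨s, hst, rfl⟩, rfl⟩
    have h_empty : (Subtype.val : {ω | t < τ ω} → Ω) ⁻¹' {ω | τ ω ≤ s} = ∅ :=
      eq_empty_of_forall_notMem fun ω hω => (hω.trans hst).not_gt ω.2
    rw [h_empty]
    exact @MeasurableSet.empty _ ⊥
  rw [MeasurableSpace.comap_sup, h_bot, sup_bot_eq]

theorem measurable_runInf {Ω : Type*} {mΩ : MeasurableSpace Ω} {X : ℝ≥0 → Ω → ℝ} {t : ℝ≥0}
    (hX : ∀ s ≤ t, Measurable (X s)) (hX_cont : ∀ ω, Continuous fun s => X s ω) :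
    Measurable (runInf X t) := by
  obtain ⟨S, hS_count, hS_dense⟩ := TopologicalSpace.exists_countable_dense (Icc (0 : ℝ≥0) t)
  have h_eq : runInf X t = fun ω => ⨅ s : S, X s.1.1 ω := by
    ext ω
    exact (hS_dense.ciInf' ((hX_cont ω).comp continuous_subtype_val)).symm
  have := hS_count.to_subtype
  rw [h_eq]
  exact .iInf fun s => hX _ s.1.2.2

section Insider

variable {Ω : Type*} {m mΩ : MeasurableSpace Ω} {P : Measure Ω} {F : Filtration ℝ≥0 mΩ}
  {X : ℝ≥0 → Ω → ℝ} {L : Ω → ℝ} {τ : Ω → ℝ≥0} {p : ℝ≥0 → ℝ → Ω → ℝ}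

theorem measurable_FM {s : ℝ≥0} (hX : Measurable[m] (runInf X s))
    (hp : Measurable[m.prod inferInstance] fun z : Ω × ℝ => p s z.2 z.1) :
    Measurable[m.prod inferInstance] fun z : Ω × ℝ => FM p X s z.2 z.1 :=
  hp.mul (.ite (measurableSet_lt measurable_snd (hX.comp measurable_fst))
    measurable_const measurable_const)

theorem hasDensityAlong_mul_survival [IsFiniteMeasure P] {s : ℝ≥0} {Z : Ω → ℝ} (hm : m ≤ mΩ)
    (hp : IsJacodDensity m P L fun z => p s z.2 z.1) (hL : Measurable L)
    (hX : Measurable[m] (runInf X s)) (hτ : ∀ ω, s < τ ω ↔ L ω < runInf X s ω)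
    (hZ : Measurable[m] Z) (hZ_int : Integrable Z P) :
    HasDensityAlong P (fun ω => (ω, L ω)) (fun ω => Z ω * if s < τ ω then 1 else 0)
      (P.prod (P.map L)) (m.prod inferInstance) fun z => Z z.1 * FM p X s z.2 z.1 := by
  have h_alive : MeasurableSet {ω | L ω < runInf X s ω} :=
    measurableSet_lt hL (hX.mono hm le_rfl)
  have h_int : Integrable (fun ω => Z ω * if L ω < runInf X s ω then 1 else 0) P :=
    (hZ_int.indicator h_alive).congr (ae_of_all _ fun ω => by simp [indicator_apply])
  convert hp.hasDensityAlong_comp hm hL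
    (f := fun z => Z z.1 * if z.2 < runInf X s z.1 then 1 else 0)
    ((hZ.comp measurable_fst).mul (.ite (measurableSet_lt measurable_snd (hX.comp measurable_fst))
      measurable_const measurable_const)) h_int using 1
  · simp only [hτ]
  · ext z
    simp only [FM]
    ring

theorem hasDensityAlong_neg_recovery [IsFiniteMeasure P] {s s' : ℝ≥0} {Z : Ω → ℝ}
    (hp : ∀ s, IsJacodDensity (F s) P L fun z => p s z.2 z.1) (hL : Measurable L)
    (hX : ∀ s, Measurable[F s] (runInf X s)) (hτ : ∀ s ω, s < τ ω ↔ L ω < runInf X s ω)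
    (hss' : s ≤ s') (hZ : Measurable[F s] Z) (hZ_int : Integrable Z P) :
    HasDensityAlong P (fun ω => (ω, L ω)) (fun ω => -(Z ω * if s < τ ω ∧ τ ω ≤ s' then 1 else 0))
      (P.prod (P.map L)) ((F s).prod inferInstance)
      fun z => Z z.1 * (FM p X s' z.2 z.1 - FM p X s z.2 z.1) := by
  have h_start := hasDensityAlong_mul_survival (F.le s) (hp s) hL (hX s) (hτ s) hZ hZ_int
  have h_end := (hasDensityAlong_mul_survival (F.le s') (hp s') hL (hX s') (hτ s')
    (hZ.mono (F.mono hss') le_rfl) hZ_int).mono (prod_le_prod_left (F.mono hss'))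
  convert h_end.sub h_start using 1
  · ext ω
    simp only [Pi.sub_apply]
    split_ifs <;> grind
  · ext z
    exact mul_sub _ _ _

theorem hasDensityAlong_recovery [IsFiniteMeasure P] {ι : Type*} {I : Finset ι} {t : ℝ≥0}
    {a b : ι → ℝ≥0} {Z : ι → Ω → ℝ} {w : Ω × ℝ → ℝ}
    (hp : ∀ s, IsJacodDensity (F s) P L fun z => p s z.2 z.1) (hL : Measurable L)
    (hX : ∀ s, Measurable[F s] (runInf X s)) (hτ : ∀ s ω, s < τ ω ↔ L ω < runInf X s ω)
    (hta : ∀ i, t ≤ a i) (hab : ∀ i, a i ≤ b i) (hZ : ∀ i, Measurable[F (a i)] (Z i))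
    (hZ_int : ∀ i, Integrable (Z i) P) (hw_meas : Measurable[(F t).prod inferInstance] w)
    (hw : ∀ᵐ l ∂(P.map L), (fun ω => w (ω, l)) =ᵐ[P]
      P[fun ω => ∑ i ∈ I, Z i ω * (FM p X (b i) l ω - FM p X (a i) l ω) | F t]) :
    HasDensityAlong P (fun ω => (ω, L ω))
      (fun ω => ∑ i ∈ I, Z i ω * if a i < τ ω ∧ τ ω ≤ b i then 1 else 0)
      (P.prod (P.map L)) ((F t).prod inferInstance) (-w) := by
  have h_sum := HasDensityAlong.sum (s := I) fun i _ => (hasDensityAlong_neg_recovery hp hL hX hτ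
    (hab i) (hZ i) (hZ_int i)).mono (prod_le_prod_left (F.mono (hta i)))
  convert (h_sum.condExp_density (F.le t)
    (hw_meas.mono (prod_le_prod_left (F.le t)) le_rfl).aestronglyMeasurable hw).neg using 1
  ext ω
  simp only [Pi.neg_apply, Finset.sum_neg_distrib, neg_neg]

end Insider

/-- The noise of an insider observing a barrier up to time `t`: it is independent of the
information `𝓚`, its increments up to `t` are independent of its value at `t`, and that value has
Lebesgue density `q`. -/
structure IsBackwardNoise {Ω : Type*} (𝓚 : MeasurableSpace Ω) {mΩ : MeasurableSpace Ω}
    (P : Measure Ω) (ε : ℝ≥0 → Ω → ℝ) (t : ℝ≥0) (q : ℝ → ℝ) : Prop where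
  measurable : ∀ s, Measurable (ε s)
  indep : Indep (⨆ s, MeasurableSpace.comap (ε s) inferInstance) 𝓚 P
  indep_increments : Indep
    (⨆ s ∈ Iic t, MeasurableSpace.comap (fun ω => ε s ω - ε t ω) inferInstance)
    (MeasurableSpace.comap (ε t) inferInstance) P
  measurable_density : Measurable q
  density_nonneg : 0 ≤ q
  map_eq : P.map (ε t) = volume.withDensity fun x => ENNReal.ofReal (q x)

/-- The σ-algebra `m ∨ σ(L + ε_s : s ≤ t)` of an agent who knows `m` and observes the noisy barrier
up to time `t`. -/
abbrev noisyBarrierSigma {Ω : Type*} (m : MeasurableSpace Ω) (L : Ω → ℝ) (ε : ℝ≥0 → Ω → ℝ)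
    (t : ℝ≥0) : MeasurableSpace Ω :=
  m ⊔ ⨆ s ∈ Iic t, MeasurableSpace.comap (fun ω => L ω + ε s ω) inferInstance

theorem noisyBarrierSigma_le_sup_increments {Ω : Type*} {m : MeasurableSpace Ω} {L : Ω → ℝ}
    {ε : ℝ≥0 → Ω → ℝ} {t : ℝ≥0} :
    noisyBarrierSigma m L ε t ≤
      (m ⊔ MeasurableSpace.comap (fun ω => L ω + ε t ω) inferInstance) ⊔
        ⨆ s ∈ Iic t, MeasurableSpace.comap (fun ω => ε s ω - ε t ω) inferInstance := by
  refine sup_le (le_sup_left.trans le_sup_left) (iSup₂_le fun s hs => ?_)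
  rw [← measurable_iff_comap_le]
  have h_split : (fun ω => L ω + ε s ω) = fun ω => (L ω + ε t ω) + (ε s ω - ε t ω) := by
    ext ω
    ring
  rw [h_split]
  refine Measurable.add ?_ ?_
  · exact (comap_measurable _).mono (le_sup_right.trans le_sup_left) le_rfl
  · exact (comap_measurable _).mono ((le_iSup₂ (f := fun s (_ : s ∈ Iic t) =>
      MeasurableSpace.comap (fun ω => ε s ω - ε t ω) inferInstance) s hs).trans le_sup_right) le_rfl

namespace IsBackwardNoise

variable {Ω : Type*} {m 𝓚 mΩ : MeasurableSpace Ω} {P : Measure Ω}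
  {ε : ℝ≥0 → Ω → ℝ} {t : ℝ≥0} {q : ℝ → ℝ} {L : Ω → ℝ} {f g : Ω → ℝ}

theorem iSup_comap_increments_le (h : IsBackwardNoise 𝓚 P ε t q) :
    ⨆ s ∈ Iic t, MeasurableSpace.comap (fun ω => ε s ω - ε t ω) inferInstance ≤ mΩ :=
  iSup₂_le fun s _ => ((h.measurable s).sub (h.measurable t)).comap_le

theorem indep_increments_sup [IsProbabilityMeasure P] (h : IsBackwardNoise 𝓚 P ε t q)
    (h𝓚 : 𝓚 ≤ mΩ) :
    Indep (⨆ s ∈ Iic t, MeasurableSpace.comap (fun ω => ε s ω - ε t ω) inferInstance)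
      (MeasurableSpace.comap (ε t) inferInstance ⊔ 𝓚) P := by
  have h_path (s : ℝ≥0) :
      Measurable[⨆ s, MeasurableSpace.comap (ε s) inferInstance] (ε s) :=
    measurable_iff_comap_le.2 (le_iSup (fun s => MeasurableSpace.comap (ε s) inferInstance) s)
  exact indep_sup_of_indep_sup h.iSup_comap_increments_le (h.measurable t).comap_le h𝓚
    h.indep_increments (indep_of_indep_of_le_left h.indep (sup_le
      (iSup₂_le fun s _ => ((h_path s).sub (h_path t)).comap_le) (h_path t).comap_le))

/-- Given the noisy barrier at time `t`, its earlier observations are irrelevant: they only add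
increments of the noise independent of everything else. -/
theorem condExp_noisyBarrierSigma_congr [IsProbabilityMeasure P]
    (h : IsBackwardNoise 𝓚 P ε t q) (hm : m ≤ 𝓚) (h𝓚 : 𝓚 ≤ mΩ) (hL : Measurable[𝓚] L)
    (hf : Measurable[MeasurableSpace.comap (ε t) inferInstance ⊔ 𝓚] f) (hf_int : Integrable f P)
    (hg : Measurable[MeasurableSpace.comap (ε t) inferInstance ⊔ 𝓚] g) (hg_int : Integrable g P)
    (hfg : P[f | m ⊔ MeasurableSpace.comap (fun ω => L ω + ε t ω) inferInstance]
      =ᵐ[P] P[g | m ⊔ MeasurableSpace.comap (fun ω => L ω + ε t ω) inferInstance]) :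
    P[f | noisyBarrierSigma m L ε t] =ᵐ[P] P[g | noisyBarrierSigma m L ε t] := by
  have h_value : m ⊔ MeasurableSpace.comap (fun ω => L ω + ε t ω) inferInstance
      ≤ MeasurableSpace.comap (ε t) inferInstance ⊔ 𝓚 :=
    sup_le (hm.trans le_sup_right) ((hL.mono le_sup_right le_rfl).add
      ((comap_measurable (ε t)).mono le_sup_left le_rfl)).comap_le
  have h_le : MeasurableSpace.comap (ε t) inferInstance ⊔ 𝓚 ≤ mΩ :=
    sup_le (h.measurable t).comap_le h𝓚
  have h_incr := h.iSup_comap_increments_le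
  have h_drop {k : Ω → ℝ} (hk : Measurable[MeasurableSpace.comap (ε t) inferInstance ⊔ 𝓚] k)
      (hk_int : Integrable k P) :=
    condExp_sup_of_indep h_value h_incr h_le (h.indep_increments_sup h𝓚) hk hk_int
  have h_fine := ((h_drop hf hf_int).trans hfg).trans (h_drop hg hg_int).symm
  have h_sup_le := sup_le (h_value.trans h_le) h_incr
  exact ((condExp_condExp_of_le noisyBarrierSigma_le_sup_increments h_sup_le).symm.trans
    (condExp_congr_ae h_fine)).trans
      (condExp_condExp_of_le noisyBarrierSigma_le_sup_increments h_sup_le)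

end IsBackwardNoise

/-- The noisy-barrier setup at time `t`: the market information `m` and the larger information `𝓚`,
which knows the barrier `L` but not the noise, for a default `τ` that occurs when `X` reaches `L`.
Here `p t` is the Jacod density of `L` given `m` and `q t` the density of the noise `ε t`. -/
structure IsNoisyBarrierModel {Ω : Type*} (m 𝓚 : MeasurableSpace Ω) {mΩ : MeasurableSpace Ω}
    (P : Measure Ω) (X : ℝ≥0 → Ω → ℝ) (L : Ω → ℝ) (τ : Ω → ℝ≥0) (p : ℝ≥0 → ℝ → Ω → ℝ)
    (ε : ℝ≥0 → Ω → ℝ) (q : ℝ≥0 → ℝ → ℝ) (t : ℝ≥0) : Prop where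
  market_le : m ≤ 𝓚
  le : 𝓚 ≤ mΩ
  measurable_barrier : Measurable[𝓚] L
  measurable_runInf : Measurable[m] (runInf X t)
  lt_default_iff : ∀ ω, t < τ ω ↔ L ω < runInf X t ω
  jacod : IsJacodDensity m P L fun z => p t z.2 z.1
  noise : IsBackwardNoise 𝓚 P ε t (q t)

/-- The insider's value at time `t` of a payoff vanishing on `{τ ≤ t}` that has density `W` along
`(ω, L ω)`: a ratio of noise-smoothed densities at the observed barrier before default, and zero
after default. -/
def insiderPrice {Ω : Type*} [MeasurableSpace Ω] (P : Measure Ω) (X : ℝ≥0 → Ω → ℝ) (L : Ω → ℝ)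
    (τ : Ω → ℝ≥0) (p : ℝ≥0 → ℝ → Ω → ℝ) (ε : ℝ≥0 → Ω → ℝ) (q : ℝ≥0 → ℝ → ℝ) (t : ℝ≥0)
    (W : Ω × ℝ → ℝ) : Ω → ℝ :=
  {ω | t < τ ω}.indicator fun ω =>
    noiseSmoothing (P.map L) (q t) W (ω, L ω + ε t ω) / NI P p X L q t (L ω + ε t ω) ω

namespace IsNoisyBarrierModel

variable {Ω : Type*} {m 𝓗 𝓚 mΩ : MeasurableSpace Ω} {P : Measure Ω}
  {X ε : ℝ≥0 → Ω → ℝ} {L Y : Ω → ℝ} {τ : Ω → ℝ≥0} {p : ℝ≥0 → ℝ → Ω → ℝ}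
  {t : ℝ≥0} {q : ℝ≥0 → ℝ → ℝ} {W : Ω × ℝ → ℝ}

theorem measurableSet_survival (h : IsNoisyBarrierModel m 𝓚 P X L τ p ε q t) :
    MeasurableSet[𝓚] {ω | t < τ ω} := by
  simp only [h.lt_default_iff]
  exact measurableSet_lt h.measurable_barrier (h.measurable_runInf.mono h.market_le le_rfl)

theorem measurable_noisy_barrier (h : IsNoisyBarrierModel m 𝓚 P X L τ p ε q t) :
    Measurable[mΩ, m.prod inferInstance] fun ω => (ω, L ω + ε t ω) :=
  (measurable_id'' (h.market_le.trans h.le)).prodMk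
    ((h.measurable_barrier.mono h.le le_rfl).add (h.noise.measurable t))

theorem measurable_NI [SFinite P] (h : IsNoisyBarrierModel m 𝓚 P X L τ p ε q t) :
    Measurable[m.prod inferInstance] fun z : Ω × ℝ => NI P p X L q t z.2 z.1 :=
  measurable_noiseSmoothing h.noise.measurable_density
    (measurable_FM h.measurable_runInf h.jacod.measurable)

theorem NI_nonneg (h : IsNoisyBarrierModel m 𝓚 P X L τ p ε q t) (x : ℝ) (ω : Ω) :
    0 ≤ NI P p X L q t x ω :=
  integral_nonneg fun l => mul_nonneg
    (mul_nonneg (h.jacod.nonneg (ω, l)) (by split_ifs <;> norm_num)) (h.noise.density_nonneg _)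

theorem hasDensityAlong_noisy_barrier [IsProbabilityMeasure P]
    (h : IsNoisyBarrierModel m 𝓚 P X L τ p ε q t) (hY : Measurable[𝓚] Y)
    (hYW : HasDensityAlong P (fun ω => (ω, L ω)) Y (P.prod (P.map L)) (m.prod inferInstance) W) :
    HasDensityAlong P (fun ω => (ω, L ω + ε t ω)) Y (P.prod volume) (m.prod inferInstance)
      (noiseSmoothing (P.map L) (q t) W) :=
  hYW.add_noise h.market_le h.le hY h.measurable_barrier (h.noise.measurable t)
    (indep_of_indep_of_le_left h.noise.indep
      (le_iSup (fun s => MeasurableSpace.comap (ε s) inferInstance) t))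
    h.noise.measurable_density h.noise.density_nonneg h.noise.map_eq

theorem hasDensityAlong_survival [IsProbabilityMeasure P]
    (h : IsNoisyBarrierModel m 𝓚 P X L τ p ε q t) :
    HasDensityAlong P (fun ω => (ω, L ω + ε t ω)) ({ω | t < τ ω}.indicator 1) (P.prod volume)
      (m.prod inferInstance) fun z => NI P p X L q t z.2 z.1 := by
  refine h.hasDensityAlong_noisy_barrier (W := fun z => FM p X t z.2 z.1)
    ((measurable_const (a := (1 : ℝ))).indicator h.measurableSet_survival) ?_
  convert hasDensityAlong_mul_survival (h.market_le.trans h.le) h.jacod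
    (h.measurable_barrier.mono h.le le_rfl) h.measurable_runInf h.lt_default_iff
    (Z := fun _ => 1) measurable_const (integrable_const 1) using 1
  · ext ω
    simp [indicator_apply]
  · simp

theorem measure_survival_inter_NI_eq_zero [IsProbabilityMeasure P]
    (h : IsNoisyBarrierModel m 𝓚 P X L τ p ε q t) :
    P {ω | t < τ ω ∧ NI P p X L q t (L ω + ε t ω) ω = 0} = 0 :=
  h.hasDensityAlong_survival.measure_density_eq_zero h.measurable_NI
    (h.le _ h.measurableSet_survival)

theorem measurable_insiderPrice [SFinite P] (h : IsNoisyBarrierModel m 𝓚 P X L τ p ε q t)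
    (hm : m ≤ 𝓗) (h_obs : Measurable[𝓗] fun ω => L ω + ε t ω)
    (hτ : MeasurableSet[𝓗] {ω | t < τ ω}) (hW : Measurable[m.prod inferInstance] W) :
    Measurable[𝓗] (insiderPrice P X L τ p ε q t W) :=
  (((measurable_noiseSmoothing h.noise.measurable_density hW).div h.measurable_NI).comp
    ((measurable_id'' hm).prodMk h_obs)).indicator hτ

theorem integrable_insiderPrice [IsProbabilityMeasure P]
    (h : IsNoisyBarrierModel m 𝓚 P X L τ p ε q t) (hY : Measurable[𝓚] Y)
    (hYτ : ∀ ω, ¬t < τ ω → Y ω = 0) (hW : Measurable[m.prod inferInstance] W)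
    (hYW : HasDensityAlong P (fun ω => (ω, L ω)) Y (P.prod (P.map L)) (m.prod inferInstance) W) :
    Integrable (insiderPrice P X L τ p ε q t W) P :=
  (h.hasDensityAlong_survival.indicator_div (h.hasDensityAlong_noisy_barrier hY hYW)
    h.measurable_noisy_barrier (prod_le_prod_left (h.market_le.trans h.le))
    (h.le _ h.measurableSet_survival) h.measurable_NI (fun z => h.NI_nonneg z.2 z.1)
    (measurable_noiseSmoothing h.noise.measurable_density hW) hYτ).integrable

theorem condExp_observation_ae_eq [IsProbabilityMeasure P]
    (h : IsNoisyBarrierModel m 𝓚 P X L τ p ε q t) (hY : Measurable[𝓚] Y)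
    (hYτ : ∀ ω, ¬t < τ ω → Y ω = 0) (hW : Measurable[m.prod inferInstance] W)
    (hYW : HasDensityAlong P (fun ω => (ω, L ω)) Y (P.prod (P.map L)) (m.prod inferInstance) W) :
    P[Y | m ⊔ MeasurableSpace.comap (fun ω => L ω + ε t ω) inferInstance] =ᵐ[P]
      P[insiderPrice P X L τ p ε q t W |
        m ⊔ MeasurableSpace.comap (fun ω => L ω + ε t ω) inferInstance] := by
  have h_ratio := h.hasDensityAlong_survival.condExp_ae_eq_indicator_div
    (h.hasDensityAlong_noisy_barrier hY hYW) h.measurable_noisy_barrier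
    (prod_le_prod_left (h.market_le.trans h.le)) (h.le _ h.measurableSet_survival)
    h.measurable_NI (fun z => h.NI_nonneg z.2 z.1)
    (measurable_noiseSmoothing h.noise.measurable_density hW) hYτ
  have h_comap : (m.prod inferInstance).comap (fun ω => (ω, L ω + ε t ω))
      = m ⊔ MeasurableSpace.comap (fun ω => L ω + ε t ω) inferInstance := by
    rw [MeasurableSpace.comap_prodMk]
    exact congrArg (· ⊔ _) MeasurableSpace.comap_id
  rwa [h_comap] at h_ratio

theorem condExp_noisyBarrierSigma_ae_eq [IsProbabilityMeasure P]
    (h : IsNoisyBarrierModel m 𝓚 P X L τ p ε q t) (hY : Measurable[𝓚] Y)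
    (hYτ : ∀ ω, ¬t < τ ω → Y ω = 0) (hW : Measurable[m.prod inferInstance] W)
    (hYW : HasDensityAlong P (fun ω => (ω, L ω)) Y (P.prod (P.map L)) (m.prod inferInstance) W) :
    P[Y | noisyBarrierSigma m L ε t] =ᵐ[P]
      P[insiderPrice P X L τ p ε q t W | noisyBarrierSigma m L ε t] :=
  h.noise.condExp_noisyBarrierSigma_congr h.market_le h.le h.measurable_barrier
    (hY.mono le_sup_right le_rfl) hYW.integrable
    (h.measurable_insiderPrice (h.market_le.trans le_sup_right)
      ((h.measurable_barrier.mono le_sup_right le_rfl).add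
        ((comap_measurable (ε t)).mono le_sup_left le_rfl))
      (le_sup_right (a := MeasurableSpace.comap (ε t) inferInstance) _ h.measurableSet_survival) hW)
    (h.integrable_insiderPrice hY hYτ hW hYW) (h.condExp_observation_ae_eq hY hYτ hW hYW)

theorem condExp_insider_ae_eq [IsProbabilityMeasure P]
    (h : IsNoisyBarrierModel m 𝓚 P X L τ p ε q t)
    (hτ : Measurable τ) (hY : Measurable[𝓚] Y)
    (hYτ : ∀ ω, ¬t < τ ω → Y ω = 0) (hW : Measurable[m.prod inferInstance] W)
    (hYW : HasDensityAlong P (fun ω => (ω, L ω)) Y (P.prod (P.map L)) (m.prod inferInstance) W) :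
    P[Y | noisyBarrierSigma m L ε t ⊔ defaultSigma τ t] =ᵐ[P] insiderPrice P X L τ p ε q t W := by
  have h_noisy_le : noisyBarrierSigma m L ε t ≤ mΩ :=
    sup_le (h.market_le.trans h.le) (iSup₂_le fun s _ =>
      ((h.measurable_barrier.mono h.le le_rfl).add (h.noise.measurable s)).comap_le)
  have h_full_le : noisyBarrierSigma m L ε t ⊔ defaultSigma τ t ≤ mΩ := by
    refine sup_le h_noisy_le (MeasurableSpace.generateFrom_le ?_)
    rintro _ ⟨s, -, rfl⟩
    exact hτ measurableSet_Iic
  have h_alive : MeasurableSet[noisyBarrierSigma m L ε t ⊔ defaultSigma τ t] {ω | t < τ ω} := by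
    have h_dead : MeasurableSet[defaultSigma τ t] {ω | τ ω ≤ t} :=
      MeasurableSpace.measurableSet_generateFrom ⟨t, le_rfl, rfl⟩
    simpa only [compl_ofPred, not_le] using
      le_sup_right (a := noisyBarrierSigma m L ε t) _ h_dead.compl
  have h_obs : Measurable[noisyBarrierSigma m L ε t] fun ω => L ω + ε t ω :=
    measurable_iff_comap_le.2 ((le_iSup₂ (f := fun s (_ : s ∈ Iic t) =>
      MeasurableSpace.comap (fun ω => L ω + ε s ω) inferInstance) t self_mem_Iic).trans
        le_sup_right)
  have h_price := h.integrable_insiderPrice hY hYτ hW hYW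
  refine (condExp_ae_eq_of_comap_val_le h_noisy_le h_full_le (h.le _ h.measurableSet_survival)
    (comap_val_sup_defaultSigma τ t).le hYW.integrable h_price hYτ
    (fun ω hω => indicator_of_notMem hω _)
    (h.condExp_noisyBarrierSigma_ae_eq hY hYτ hW hYW)).trans (Filter.EventuallyEq.of_eq ?_)
  exact condExp_of_stronglyMeasurable h_full_le (h.measurable_insiderPrice
    (𝓗 := noisyBarrierSigma m L ε t ⊔ defaultSigma τ t) (le_sup_left.trans le_sup_left)
    (h_obs.mono le_sup_left le_rfl) h_alive hW).stronglyMeasurable h_price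

end IsNoisyBarrierModel

section Recovery

variable {Ω ι : Type*} {𝓚 mΩ : MeasurableSpace Ω} {P : Measure Ω} {X ε : ℝ≥0 → Ω → ℝ} {L : Ω → ℝ}
  {τ : Ω → ℝ≥0} {p : ℝ≥0 → ℝ → Ω → ℝ} {q : ℝ≥0 → ℝ → ℝ} {t : ℝ≥0} {I : Finset ι} {a b : ι → ℝ≥0}
  {Z : ι → Ω → ℝ}

theorem measurable_default_time (hL : Measurable L) (hX : ∀ s, Measurable (runInf X s))
    (hτ : ∀ s ω, s < τ ω ↔ L ω < runInf X s ω) : Measurable τ := by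
  refine measurable_of_Ioi fun s => ?_
  change MeasurableSet {ω | s < τ ω}
  simp only [hτ]
  exact measurableSet_lt hL (hX s)

theorem measurable_recovery (hτ : Measurable τ) (hZ : ∀ i, Measurable (Z i)) :
    Measurable fun ω => ∑ i ∈ I, Z i ω * if a i < τ ω ∧ τ ω ≤ b i then 1 else 0 :=
  Finset.measurable_fun_sum I fun i _ =>
    (hZ i).mul (.ite (hτ measurableSet_Ioc) measurable_const measurable_const)

theorem recovery_eq_zero_of_default (hta : ∀ i, t ≤ a i) {ω : Ω} (hω : ¬t < τ ω) :
    ∑ i ∈ I, Z i ω * (if a i < τ ω ∧ τ ω ≤ b i then 1 else 0) = 0 :=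
  Finset.sum_eq_zero fun i _ => by
    rw [if_neg fun h => hω ((hta i).trans_lt h.1), mul_zero]

theorem insiderPrice_neg (w : Ω × ℝ → ℝ) :
    insiderPrice P X L τ p ε q t (-w) = fun ω => if t < τ ω then
      -((∫ l, w (ω, l) * q t (L ω + ε t ω - l) ∂(P.map L)) / NI P p X L q t (L ω + ε t ω) ω)
    else 0 := by
  ext ω
  rw [insiderPrice, noiseSmoothing_neg]
  simp only [Pi.neg_apply, neg_div, indicator_apply, mem_ofPred_eq, noiseSmoothing]

theorem insider_recovery_term_general [IsProbabilityMeasure P] {F : Filtration ℝ≥0 mΩ}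
    (hX : Adapted F (runInf X)) (hL : Measurable L)
    (hτ : ∀ s ω, s < τ ω ↔ L ω < runInf X s ω)
    (hp : ∀ s, IsJacodDensity (F s) P L fun z => p s z.2 z.1)
    (hε : IsBackwardNoise ((⨆ s, F s) ⊔ MeasurableSpace.comap L inferInstance) P ε t (q t))
    (hta : ∀ i, t ≤ a i) (hab : ∀ i, a i ≤ b i) (hZ : ∀ i, Measurable[F (a i)] (Z i))
    (hZ_int : ∀ i, Integrable (Z i) P) {w : Ω × ℝ → ℝ}
    (hw_meas : Measurable[(F t).prod inferInstance] w)
    (hw : ∀ᵐ l ∂(P.map L), (fun ω => w (ω, l)) =ᵐ[P]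
      P[fun ω => ∑ i ∈ I, Z i ω * (FM p X (b i) l ω - FM p X (a i) l ω) | F t]) :
    P {ω | t < τ ω ∧ NI P p X L q t (L ω + ε t ω) ω = 0} = 0 ∧
    P[fun ω => ∑ i ∈ I, Z i ω * (if a i < τ ω ∧ τ ω ≤ b i then 1 else 0) |
        insiderFullSigma F L ε τ t] =ᵐ[P]
      fun ω => if t < τ ω then
        -((∫ l, w (ω, l) * q t (L ω + ε t ω - l) ∂(P.map L)) / NI P p X L q t (L ω + ε t ω) ω)
      else 0 := by
  let 𝓚 := (⨆ s, F s) ⊔ MeasurableSpace.comap L inferInstance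
  have hF_le (s : ℝ≥0) : F s ≤ 𝓚 := (le_iSup F s).trans le_sup_left
  have h𝓚 : 𝓚 ≤ mΩ := sup_le (iSup_le F.le) hL.comap_le
  have hL𝓚 : Measurable[𝓚] L := (comap_measurable L).mono le_sup_right le_rfl
  have hτ𝓚 : Measurable[𝓚] τ :=
    measurable_default_time hL𝓚 (fun s => (hX s).mono (hF_le s) le_rfl) hτ
  have h_model : IsNoisyBarrierModel (F t) 𝓚 P X L τ p ε q t :=
    ⟨hF_le t, h𝓚, hL𝓚, hX t, hτ t, hp t, hε⟩
  refine ⟨h_model.measure_survival_inter_NI_eq_zero, ?_⟩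
  rw [← insiderPrice_neg]
  exact h_model.condExp_insider_ae_eq (hτ𝓚.mono h𝓚 le_rfl)
    (measurable_recovery hτ𝓚 fun i => (hZ i).mono (hF_le _) le_rfl)
    (fun _ => recovery_eq_zero_of_default hta) hw_meas.neg
    (hasDensityAlong_recovery hp hL hX hτ hta hab hZ hZ_int hw_meas hw)

end Recovery

/-- **Recovery-payment term in the proof of Theorem 5.1.** Under Jacod's density hypothesis
and the noisy-barrier setup, for a partition `t = t_0 < ⋯ < t_{n+1} = T`, bounded
`F_{t_i}`-measurable `Z_i`, and `w(·,l)` a version (for `P^L`-a.e. `l`) of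
`E_P[Σ_i Z_i (F^M_{t_{i+1}}(l) − F^M_{t_i}(l)) | F_t]`, one has, `P`-a.s.,
`E_P[Σ_i Z_i 1_{t_i < τ ≤ t_{i+1}} | G^I_t] = −(1_{τ > t}/N_t(L_t)) ∫ w(·,l) q_t(L_t − l)
P^L(dl)` (the right-hand side being `0` on `{τ ≤ t}`). -/
theorem insider_recovery_term
    {Ω : Type*} [m0 : MeasurableSpace Ω] {P : Measure Ω} [IsProbabilityMeasure P]
    (F : Filtration ℝ≥0 m0)
    (X : ℝ≥0 → Ω → ℝ) (hX_adapted : Adapted F X)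
    (hX_cont : ∀ ω, Continuous fun s => X s ω)
    (L : Ω → ℝ) (hL : Measurable L)
    (hX0 : ∀ᵐ ω ∂P, L ω < X 0 ω)
    (τ : Ω → ℝ≥0)
    (hτ : ∀ (θ : ℝ≥0) (ω : Ω), θ < τ ω ↔ L ω < runInf X θ ω)
    -- Jacod's density hypothesis
    (p : ℝ≥0 → ℝ → Ω → ℝ)
    (hp_nonneg : ∀ t x ω, 0 ≤ p t x ω)
    (hp_meas : ∀ t, Measurable[(F t).prod inferInstance] fun q : Ω × ℝ => p t q.2 q.1)
    (hp_pos : ∀ t, ∀ᵐ ω ∂P, 0 < p t (L ω) ω)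
    (hp_density : ∀ (t : ℝ≥0) (f : ℝ → ℝ), Measurable f → (∃ C, ∀ x, |f x| ≤ C) →
      (P[fun ω => f (L ω)|F t]) =ᵐ[P] fun ω => ∫ x, f x * p t x ω ∂(P.map L))
    -- the noise process: continuous, independent of `F_∞ ∨ σ(L)`, with backwardly
    -- independent increments, whose marginal laws admit Lebesgue densities `q_t`
    (ε : ℝ≥0 → Ω → ℝ) (hε_meas : ∀ s, Measurable (ε s))
    (hε_cont : ∀ ω, Continuous fun s => ε s ω)
    (hε_indep : Indep (⨆ s, MeasurableSpace.comap (ε s) inferInstance)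
      ((⨆ s, F s) ⊔ MeasurableSpace.comap L inferInstance) P)
    (hε_back : ∀ t θ : ℝ≥0, t ≤ θ →
      Indep (⨆ s ∈ Set.Iic t, MeasurableSpace.comap (fun ω => ε s ω - ε t ω) inferInstance)
        (MeasurableSpace.comap (ε θ) inferInstance) P)
    (q : ℝ≥0 → ℝ → ℝ) (hq_meas : ∀ s, Measurable (q s)) (hq_nonneg : ∀ s x, 0 ≤ q s x)
    (hq_density : ∀ s, P.map (ε s) = volume.withDensity fun x => ENNReal.ofReal (q s x))
    -- the partition `t = t_0 < t_1 < ⋯ < t_{n+1} = T` and the stepwise recovery payments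
    (n : ℕ) (ts : Fin (n + 2) → ℝ≥0) (hts : StrictMono ts)
    (t T : ℝ≥0) (hts0 : ts 0 = t) (htsT : ts (Fin.last (n + 1)) = T)
    (Z : Fin (n + 1) → Ω → ℝ)
    (hZ_meas : ∀ i, Measurable[F (ts i.castSucc)] (Z i))
    (hZ_bdd : ∀ i, ∃ C, ∀ ω, |Z i ω| ≤ C)
    -- the kernel `w`
    (w : Ω × ℝ → ℝ)
    (hw_meas : Measurable[(F t).prod inferInstance] w)
    (hw : ∀ᵐ l ∂(P.map L), (fun ω => w (ω, l)) =ᵐ[P]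
      P[fun ω => ∑ i : Fin (n + 1),
        Z i ω * (FM p X (ts i.succ) l ω - FM p X (ts i.castSucc) l ω)|F t]) :
    P {ω | t < τ ω ∧ NI P p X L q t (L ω + ε t ω) ω = 0} = 0 ∧
    (P[fun ω => ∑ i : Fin (n + 1),
        Z i ω * (if ts i.castSucc < τ ω ∧ τ ω ≤ ts i.succ then 1 else 0)|
          insiderFullSigma F L ε τ t]) =ᵐ[P]
      fun ω => if t < τ ω then
        -((∫ l, w (ω, l) * q t (L ω + ε t ω - l) ∂(P.map L))
          / NI P p X L q t (L ω + ε t ω) ω)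
      else 0 := by
  have hX : Adapted F (runInf X) := fun s => measurable_runInf
    (fun r hr => (hX_adapted r).mono (F.mono hr) le_rfl) hX_cont
  have h_noise : IsBackwardNoise ((⨆ s, F s) ⊔ MeasurableSpace.comap L inferInstance) P ε t (q t) :=
    ⟨hε_meas, hε_indep, hε_back t t le_rfl, hq_meas t, hq_nonneg t, hq_density t⟩
  have hZ_int (i : Fin (n + 1)) : Integrable (Z i) P := by
    obtain ⟨C, hC⟩ := hZ_bdd i
    exact .of_bound ((hZ_meas i).mono (F.le _) le_rfl).aestronglyMeasurable C (ae_of_all _ hC)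
  exact insider_recovery_term_general hX hL hτ
    (fun s => ⟨fun z => hp_nonneg s z.2 z.1, hp_meas s, hp_density s⟩) h_noise
    (fun i => hts0 ▸ hts.monotone (Fin.zero_le _)) (fun i => hts.monotone (Fin.castSucc_le_succ i))
    hZ_meas hZ_int hw_meas hw
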